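/- Let q > 1 be a real number, λ a real number, r and s natural numbers, and ρ_0, …, ρ_r real numbers (with ρ_i = 0 for i > r). Then Σ_{u=0}^{r+s} Σ_{i=0}^{u} q^{2is} ρ_i [s; u−i] γ(λ−2i, u−i) = q^{λs} · Σ_{i=0}^{r} ρ_i. (This says that the skew-q-product of any homogeneous polynomial ρ of degree r with μ^{[s]}, whose coefficients are [s;k]γ(λ,k), evaluated at X = Y = 1 and parameter λ, equals q^{λs} times ρ evaluated at X = Y = 1.) -/

import Mathlib

/-- The skew-q-nary Gaussian coefficient `[x;k]` for real `x`. -/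
noncomputable def gaussQ (q x : ℝ) (k : ℕ) : ℝ :=
  ∏ i ∈ Finset.range k, (q ^ (2 * x) - q ^ (2 * (i : ℝ))) / (q ^ (2 * (k : ℝ)) - q ^ (2 * (i : ℝ)))

/-- The skew-q-nary Gamma function `γ(x,k)`. -/
noncomputable def skewGamma (q x : ℝ) (k : ℕ) : ℝ :=
  ∏ i ∈ Finset.range k, (q ^ x - q ^ (2 * (i : ℝ)))

open Finset

/-- The numerators of the Gaussian coefficients with base `b` satisfy a shift identity. -/
lemma prod_pow_succ_sub_pow (b : ℝ) (s k : ℕ) :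
    ∏ i ∈ range (k + 1), (b ^ (s + 1) - b ^ i)
      = (b ^ (s + 1) - 1) * b ^ k * ∏ i ∈ range k, (b ^ s - b ^ i) := by
  have h : ∀ i ∈ range k, b ^ (s + 1) - b ^ (i + 1) = b * (b ^ s - b ^ i) := by
    intro i _
    ring
  rw [prod_range_succ', prod_congr rfl h, prod_mul_distrib, prod_const, card_range, pow_zero]
  ring

lemma prod_pow_sub_pow_ne_zero {b : ℝ} (hb : 1 < b) (k : ℕ) :
    ∏ i ∈ range k, (b ^ k - b ^ i) ≠ 0 :=
  prod_ne_zero_iff.2 fun _ hi =>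
    sub_ne_zero.2 (pow_lt_pow_right₀ hb (mem_range.1 hi)).ne'

lemma rpow_two_mul_natCast {q : ℝ} (hq : 0 ≤ q) (n : ℕ) : q ^ (2 * (n : ℝ)) = (q ^ 2) ^ n := by
  rw [Real.rpow_mul_natCast hq, Real.rpow_two]

lemma gaussQ_natCast {q : ℝ} (hq : 0 ≤ q) (s k : ℕ) :
    gaussQ q s k = (∏ i ∈ range k, ((q ^ 2) ^ s - (q ^ 2) ^ i)) /
      ∏ i ∈ range k, ((q ^ 2) ^ k - (q ^ 2) ^ i) := by
  simp only [gaussQ, rpow_two_mul_natCast hq, prod_div_distrib]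

lemma gaussQ_zero_right (q x : ℝ) : gaussQ q x 0 = 1 := by
  simp [gaussQ]

lemma gaussQ_eq_zero_of_lt {q : ℝ} {s k : ℕ} (h : s < k) : gaussQ q s k = 0 :=
  prod_eq_zero (mem_range.2 h) (by simp)

/-- The Pascal recurrence for the skew-q-nary Gaussian coefficients. -/
lemma gaussQ_succ_succ {q : ℝ} (hq : 1 < q) (s k : ℕ) :
    gaussQ q (s + 1 : ℕ) (k + 1)
      = gaussQ q s k + (q ^ 2) ^ (k + 1) * gaussQ q s (k + 1) := by
  have hq0 : 0 ≤ q := by linarith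
  have hb : 1 < q ^ 2 := one_lt_pow₀ hq two_ne_zero
  simp only [gaussQ_natCast hq0]
  generalize q ^ 2 = b at hb
  have hD := prod_pow_sub_pow_ne_zero hb k
  have hk : b ^ (k + 1) - 1 ≠ 0 := sub_ne_zero.2 (one_lt_pow₀ hb k.succ_ne_zero).ne'
  have hbk : b ^ k ≠ 0 := by positivity
  rw [prod_pow_succ_sub_pow, prod_pow_succ_sub_pow, prod_range_succ _ k]
  generalize ∏ i ∈ range k, (b ^ k - b ^ i) = D at hD
  generalize ∏ i ∈ range k, (b ^ s - b ^ i) = N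
  field_simp
  ring

lemma skewGamma_succ {q : ℝ} (hq : 0 ≤ q) (x : ℝ) (k : ℕ) :
    skewGamma q x (k + 1) = skewGamma q x k * (q ^ x - (q ^ 2) ^ k) := by
  rw [skewGamma, prod_range_succ, rpow_two_mul_natCast hq, skewGamma]

/-- The q-binomial expansion of `(q ^ x) ^ s` in the skew-q-nary Gamma functions. -/
lemma sum_gaussQ_mul_skewGamma {q : ℝ} (hq : 1 < q) (x : ℝ) {s n : ℕ} (hn : s < n) :
    ∑ k ∈ range n, gaussQ q s k * skewGamma q x k = (q ^ x) ^ s := by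
  have hq0 : 0 ≤ q := by linarith
  induction s generalizing n with
  | zero =>
    rw [sum_eq_single_of_mem 0 (mem_range.2 hn)]
    · simp [gaussQ, skewGamma]
    · intro k _ hk
      rw [gaussQ_eq_zero_of_lt (Nat.pos_of_ne_zero hk), zero_mul]
  | succ s ih =>
    obtain ⟨m, rfl⟩ : ∃ m, n = m + 1 := ⟨n - 1, by omega⟩
    have hm : s < m := by omega
    have hshift : ∑ k ∈ range m, (q ^ 2) ^ (k + 1) * gaussQ q s (k + 1) * skewGamma q x (k + 1)
        + skewGamma q x 0 = ∑ k ∈ range m, (q ^ 2) ^ k * gaussQ q s k * skewGamma q x k := by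
      have h := sum_range_succ' (fun k => (q ^ 2) ^ k * gaussQ q s k * skewGamma q x k) m
      rw [sum_range_succ, gaussQ_eq_zero_of_lt hm, gaussQ_zero_right] at h
      simpa using h.symm
    rw [sum_range_succ', gaussQ_zero_right, one_mul]
    simp only [gaussQ_succ_succ hq, add_mul]
    rw [sum_add_distrib, add_assoc, hshift, ← sum_add_distrib, pow_succ _ s, ← ih hm, sum_mul]
    refine sum_congr rfl fun k _ => ?_
    rw [skewGamma_succ hq0]
    ring

/-- The skew-q-product of any homogeneous polynomial `ρ` of degree `r` with `μ^{[s]}`,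
evaluated at `X = Y = 1`, equals `q^{λs}` times `ρ(1,1)`. -/
theorem stmt11 (q : ℝ) (hq : 1 < q) (lam : ℝ) (r s : ℕ) (ρ : ℕ → ℝ)
    (hρ : ∀ i, r < i → ρ i = 0) :
    (∑ u ∈ Finset.range (r + s + 1), ∑ i ∈ Finset.range (u + 1),
        q ^ (2 * i * s) * ρ i * gaussQ q (s : ℝ) (u - i) * skewGamma q (lam - 2 * (i : ℝ)) (u - i))
      = q ^ (lam * (s : ℝ)) * ∑ i ∈ Finset.range (r + 1), ρ i := by
  have hq0 : 0 < q := by linarith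
  rw [sum_comm' (t' := range (r + s + 1)) (s' := fun i => Ico i (r + s + 1))
    (by intro u i; simp only [mem_range, mem_Ico]; omega)]
  have hsub : range (r + 1) ⊆ range (r + s + 1) := range_subset_range.2 (by omega)
  rw [← sum_subset hsub, mul_sum]
  · refine sum_congr rfl fun i hi => ?_
    have hi' := mem_range.1 hi
    have hpow : (q ^ (lam - 2 * (i : ℝ))) ^ s * q ^ (2 * i * s) = q ^ (lam * (s : ℝ)) := by
      rw [← Real.rpow_mul_natCast hq0.le, ← Real.rpow_natCast q (2 * i * s), ← Real.rpow_add hq0]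
      congr 1
      push_cast
      ring
    rw [sum_Ico_eq_sum_range, ← hpow,
      ← sum_gaussQ_mul_skewGamma hq _ (show s < r + s + 1 - i by omega), sum_mul, sum_mul]
    refine sum_congr rfl fun k _ => ?_
    rw [Nat.add_sub_cancel_left]
    ring
  · intro i _ hi
    have hρi : ρ i = 0 := hρ i (by rw [mem_range] at hi; omega)
    simp [hρi]
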